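/- Assume L/2 ≥ M ≥ r. Fix a subset S ⊆ {1,…,M}; for M+1 ≤ l ≤ L let Y_l = (x_l, (x_{l−s})_{s∈S}), let ν denote the marginal of the stationary window distribution μ̄ corresponding to Y, and assume ν is entrywise positive. Then the expected χ²-divergence of the empirical window distribution from ν satisfies E_{X∼p}[ D_{χ²}( (L−M)^{−1} Σ_{l=M+1}^{L} δ_{Y_l} ‖ ν ) ] ≤ ( 4(1−λ)^{−1}√(D₀+1) + 16M ) / ( L · min_E ν(E) ), where δ_{Y_l} is the point mass at the (random) window Y_l, so the first argument is the empirical distribution of Y_{M+1},…,Y_L. -/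

import Mathlib

open Finset

/-- Probability of the full sequence `x` (tokens indexed `0,…,T-1`, i.e. `x_1,…,x_T`)
under the `n`-gram Markov chain with parent offsets `r`, transition kernel `pk`,
and initial distribution `init` on the first `R` tokens. -/
noncomputable def ngramProb (d n R T : ℕ) (r : Fin n → ℕ)
    (pk : (Fin n → Fin d) → Fin d → ℝ) (init : (Fin R → Fin d) → ℝ)
    (hRT : R ≤ T) (x : Fin T → Fin d) : ℝ :=
  init (fun i => x ⟨i.1, lt_of_lt_of_le i.2 hRT⟩) *
    ∏ l ∈ (Finset.Ico R T).attach,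
      pk (fun k => x ⟨l.1 - r k, lt_of_le_of_lt (Nat.sub_le _ _) (Finset.mem_Ico.mp l.2).2⟩)
        (x ⟨l.1, (Finset.mem_Ico.mp l.2).2⟩)

/-- The window transition matrix `P_π` on `𝒳^R` of the `n`-gram chain:
`P(Z', Z) = π(z'_R | Z parents) · 1{Z' is the shift of Z}`. -/
noncomputable def windowMatrix (d n R : ℕ) (hR : 0 < R) (r : Fin n → ℕ)
    (hrpos : ∀ k, 0 < r k) (pk : (Fin n → Fin d) → Fin d → ℝ) :
    Matrix (Fin R → Fin d) (Fin R → Fin d) ℝ :=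
  Matrix.of fun Z' Z =>
    if ∀ j : Fin (R - 1),
        Z' ⟨j.1, lt_of_lt_of_le j.2 (Nat.sub_le R 1)⟩ = Z ⟨j.1 + 1, by have := j.2; omega⟩ then
      pk (fun k => Z ⟨R - r k, Nat.sub_lt hR (hrpos k)⟩) (Z' ⟨R - 1, Nat.sub_lt hR Nat.one_pos⟩)
    else 0

/-- The matrix `K - √μ (√μ)ᵀ` where `K = diag(√μ)⁻¹ P_π diag(√μ)`. -/
noncomputable def specA (d n R : ℕ) (hR : 0 < R) (r : Fin n → ℕ) (hrpos : ∀ k, 0 < r k)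
    (pk : (Fin n → Fin d) → Fin d → ℝ) (μ : (Fin R → Fin d) → ℝ) :
    Matrix (Fin R → Fin d) (Fin R → Fin d) ℝ :=
  (Matrix.diagonal fun Z => (Real.sqrt (μ Z))⁻¹) * windowMatrix d n R hR r hrpos pk *
      (Matrix.diagonal fun Z => Real.sqrt (μ Z)) -
    Matrix.vecMulVec (fun Z => Real.sqrt (μ Z)) (fun Z => Real.sqrt (μ Z))

/-- The tuple `(x_{l0-s})_{s ∈ S}` of tokens at offsets `S` before position `l0` (0-based). -/
def parents (d T : ℕ) (S : Finset ℕ) (x : Fin T → Fin d) (l0 : ℕ) (hl : l0 < T) :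
    {s // s ∈ S} → Fin d :=
  fun s => x ⟨l0 - s.1, lt_of_le_of_lt (Nat.sub_le _ _) hl⟩

/-- The window `Y_{l0} = (x_{l0}, (x_{l0-s})_{s ∈ S})` (0-based position `l0`). -/
def window (d T : ℕ) (S : Finset ℕ) (x : Fin T → Fin d) (l0 : ℕ) (hl : l0 < T) :
    Fin d × ({s // s ∈ S} → Fin d) :=
  (x ⟨l0, hl⟩, parents d T S x l0 hl)

/-- The law of the window `Y_{l0}` when the full sequence is distributed as `q`. -/
noncomputable def windowLaw (d T : ℕ) (S : Finset ℕ) (q : (Fin T → Fin d) → ℝ)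
    (l0 : ℕ) (hl : l0 < T) (w : Fin d × ({s // s ∈ S} → Fin d)) : ℝ :=
  ∑ x : Fin T → Fin d, if window d T S x l0 hl = w then q x else 0

/-- Total variation distance: half the ℓ₁ distance. -/
noncomputable def tvDist {α : Type*} [Fintype α] (p q : α → ℝ) : ℝ :=
  (∑ w, |p w - q w|) / 2

/-- χ²-divergence `D_{χ²}(p ‖ q) = Σ_ω (p ω - q ω)² / q ω`. -/
noncomputable def chiSq {α : Type*} [Fintype α] (p q : α → ℝ) : ℝ :=
  ∑ w, (p w - q w) ^ 2 / q w

theorem icoLtSucc {M L : ℕ} (l : {m // m ∈ Finset.Ico M L}) : l.1 < L + 1 :=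
  Nat.lt_succ_of_lt (Finset.mem_Ico.mp l.2).2

section NGramHelpers

/-- Extend a finite sequence by a default value. -/
def extSeq {d : ℕ} (z : Fin d) {T : ℕ} (x : Fin T → Fin d) : ℕ → Fin d :=
  fun i => if h : i < T then x ⟨i, h⟩ else z

/-- shift by `j`. -/
def shSeq {d : ℕ} (j : ℕ) (x : ℕ → Fin d) : ℕ → Fin d := fun i => x (i + j)

/-- first `R` tokens. -/
def resSeq {d : ℕ} (R : ℕ) (x : ℕ → Fin d) : Fin R → Fin d := fun i => x i.1

/-- `F` depends only on coordinates `< c`. -/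
def DepLt {d : ℕ} (c : ℕ) (F : (ℕ → Fin d) → ℝ) : Prop :=
  ∀ x y, (∀ i < c, x i = y i) → F x = F y

/-- integrate out position `l`. -/
noncomputable def stepOp {d n : ℕ} (r : Fin n → ℕ) (pk : (Fin n → Fin d) → Fin d → ℝ) (l : ℕ)
    (F : (ℕ → Fin d) → ℝ) (x : ℕ → Fin d) : ℝ :=
  ∑ e, pk (fun k => x (l - r k)) e * F (Function.update x l e)

/-- integrate out positions `a, …, a+k-1`. -/
noncomputable def iterOp {d n : ℕ} (r : Fin n → ℕ) (pk : (Fin n → Fin d) → Fin d → ℝ) :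
    ℕ → ℕ → ((ℕ → Fin d) → ℝ) → (ℕ → Fin d) → ℝ
  | _, 0, F => F
  | a, k + 1, F => stepOp r pk a (iterOp r pk (a + 1) k F)

variable {d n : ℕ} (r : Fin n → ℕ) (pk : (Fin n → Fin d) → Fin d → ℝ)

theorem iterOp_comp (j k : ℕ) (F : (ℕ → Fin d) → ℝ) : ∀ a,
    iterOp r pk a (j + k) F = iterOp r pk a j (iterOp r pk (a + j) k F) := by
  induction j with
  | zero => intro a; simp [iterOp]
  | succ j ih =>
    intro a
    rw [show j + 1 + k = (j + k) + 1 by ring]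
    simp only [iterOp]
    rw [ih, show a + 1 + j = a + (j + 1) by ring]

theorem DepLt.mono {c c' : ℕ} {F : (ℕ → Fin d) → ℝ} (h : DepLt c F) (hc : c ≤ c') :
    DepLt c' F := fun x y hxy => h x y (fun i hi => hxy i (lt_of_lt_of_le hi hc))

theorem stepOp_pull {a : ℕ} {G : (ℕ → Fin d) → ℝ} (hG : DepLt a G) (F : (ℕ → Fin d) → ℝ) :
    stepOp r pk a (fun x => G x * F x) = fun x => G x * stepOp r pk a F x := by
  funext x
  simp only [stepOp, Finset.mul_sum]
  refine Finset.sum_congr rfl fun e _ => ?_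
  rw [hG (Function.update x a e) x (fun i hi => Function.update_of_ne (ne_of_lt hi) _ _)]
  ring

theorem iterOp_pull {G : (ℕ → Fin d) → ℝ} (F : (ℕ → Fin d) → ℝ) (k : ℕ) :
    ∀ a, DepLt a G → 
    iterOp r pk a k (fun x => G x * F x) = fun x => G x * iterOp r pk a k F x := by
  induction k with
  | zero => intro a _; rfl
  | succ k ih =>
    intro a hG
    simp only [iterOp]
    rw [ih (a + 1) (hG.mono (Nat.le_succ a)), stepOp_pull r pk hG]

theorem iterOp_one (hpk1 : ∀ Y, ∑ e, pk Y e = 1) (k : ℕ) :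
    ∀ a, iterOp r pk a k (fun _ => 1) = fun _ => 1 := by
  induction k with
  | zero => intro a; rfl
  | succ k ih =>
    intro a
    simp only [iterOp]
    rw [ih]
    funext x
    simp [stepOp, hpk1]

theorem iterOp_triv (hpk1 : ∀ Y, ∑ e, pk Y e = 1) {G : (ℕ → Fin d) → ℝ} (k a : ℕ)
    (hG : DepLt a G) : iterOp r pk a k G = G := by
  have := iterOp_pull r pk (fun _ => 1) k a hG
  rw [iterOp_one r pk hpk1] at this
  simpa using this

theorem iterOp_sum {ι : Type*} (s : Finset ι) (F : ι → (ℕ → Fin d) → ℝ) (k : ℕ) :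
    ∀ a, iterOp r pk a k (fun x => ∑ i ∈ s, F i x) =
      fun x => ∑ i ∈ s, iterOp r pk a k (F i) x := by
  induction k with
  | zero => intro a; rfl
  | succ k ih =>
    intro a
    simp only [iterOp]
    rw [ih]
    funext x
    simp only [stepOp, Finset.mul_sum]
    rw [Finset.sum_comm]

theorem iterOp_sub (F G : (ℕ → Fin d) → ℝ) (k : ℕ) :
    ∀ a, iterOp r pk a k (fun x => F x - G x) =
      fun x => iterOp r pk a k F x - iterOp r pk a k G x := by
  induction k with
  | zero => intro a; rfl
  | succ k ih =>
    intro a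
    simp only [iterOp]
    rw [ih]
    funext x
    simp only [stepOp, mul_sub, Finset.sum_sub_distrib]

theorem iterOp_mono (hpk0 : ∀ Y e, 0 ≤ pk Y e) {F G : (ℕ → Fin d) → ℝ} (h : ∀ x, F x ≤ G x)
    (k : ℕ) : ∀ a x, iterOp r pk a k F x ≤ iterOp r pk a k G x := by
  induction k with
  | zero => intro a; exact h
  | succ k ih =>
    intro a x
    simp only [iterOp]
    exact Finset.sum_le_sum fun e _ => mul_le_mul_of_nonneg_left (ih _ _) (hpk0 _ _)

theorem stepOp_dep (hrpos : ∀ i, 0 < r i) {a : ℕ} (ha : 0 < a) {F : (ℕ → Fin d) → ℝ}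
    (hF : DepLt (a + 1) F) : DepLt a (stepOp r pk a F) := by
  intro x y hxy
  simp only [stepOp]
  refine Finset.sum_congr rfl fun e _ => ?_
  congr 1
  · congr 1
    funext k
    exact hxy _ (Nat.sub_lt ha (hrpos k))
  · apply hF
    intro i hi
    by_cases h : i = a
    · subst h; simp
    · rw [Function.update_of_ne h, Function.update_of_ne h]
      exact hxy _ (by omega)

theorem iterOp_dep (hrpos : ∀ i, 0 < r i) {F : (ℕ → Fin d) → ℝ} (k : ℕ) :
    ∀ a, 0 < a → DepLt (a + k) F → DepLt a (iterOp r pk a k F) := by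
  induction k with
  | zero => intro a _ h; exact h
  | succ k ih =>
    intro a ha h
    simp only [iterOp]
    refine stepOp_dep r pk hrpos ha (ih _ (Nat.succ_pos a) ?_)
    rwa [show a + 1 + k = a + (k + 1) by ring]

theorem stepOp_sh {R : ℕ} (hrR : ∀ i, r i ≤ R) (j l : ℕ) (hl : R ≤ l) (F : (ℕ → Fin d) → ℝ) :
    stepOp r pk (l + j) (fun x => F (shSeq j x)) = fun x => stepOp r pk l F (shSeq j x) := by
  funext x
  simp only [stepOp]
  refine Finset.sum_congr rfl fun e _ => ?_
  congr 1
  · congr 1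
    funext k
    simp only [shSeq]
    congr 1
    have := hrR k
    omega
  · congr 1
    funext i
    by_cases h : i = l
    · subst h; simp [shSeq]
    · rw [Function.update_of_ne h]
      simp only [shSeq]
      rw [Function.update_of_ne (by omega)]

theorem iterOp_sh {R : ℕ} (hrR : ∀ i, r i ≤ R) (F : (ℕ → Fin d) → ℝ) (j k : ℕ) :
    ∀ a, R ≤ a → iterOp r pk (a + j) k (fun x => F (shSeq j x)) =
      fun x => iterOp r pk a k F (shSeq j x) := by
  induction k with
  | zero => intro a _; rfl
  | succ k ih =>
    intro a ha
    simp only [iterOp]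
    rw [show a + j + 1 = (a + 1) + j by ring, ih (a + 1) (by omega), stepOp_sh r pk hrR j a ha]

/-- the dual Markov operator. -/
noncomputable def dualOp (R : ℕ) (hR : 0 < R) (hrpos : ∀ k, 0 < r k)
    (h : (Fin R → Fin d) → ℝ) (Z : Fin R → Fin d) : ℝ :=
  ∑ Z', windowMatrix d n R hR r hrpos pk Z' Z * h Z'

theorem stepOp_dual (R : ℕ) (hR : 0 < R) (hrpos : ∀ k, 0 < r k)
    (h : (Fin R → Fin d) → ℝ) :
    stepOp r pk R (fun x => h (resSeq R (shSeq 1 x))) =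
      fun x => dualOp r pk R hR hrpos h (resSeq R x) := by
  funext x
  simp only [stepOp, dualOp]
  refine Finset.sum_of_injOn (fun e => resSeq R (shSeq 1 (Function.update x R e))) ?_ ?_ ?_ ?_
  · intro e _ e' _ hee
    have := congrFun hee ⟨R - 1, Nat.sub_lt hR Nat.one_pos⟩
    simpa [resSeq, shSeq, Nat.sub_add_cancel hR] using this
  · intro e _; simp
  · intro Z' _ hZ'
    simp only [windowMatrix, Matrix.of_apply]
    rw [if_neg, zero_mul]
    intro hc
    apply hZ'
    refine ⟨Z' ⟨R - 1, Nat.sub_lt hR Nat.one_pos⟩, by simp, ?_⟩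
    funext i
    simp only [resSeq, shSeq]
    by_cases hi : i.1 + 1 = R
    · rw [hi, Function.update_self]
      congr 1
      exact Fin.ext (by simp; omega)
    · rw [Function.update_of_ne hi]
      have := hc ⟨i.1, by have := i.2; omega⟩
      simpa [resSeq] using this.symm
  · intro e _
    simp only [windowMatrix, Matrix.of_apply]
    rw [if_pos]
    · congr 2
      simp [resSeq, shSeq, Nat.sub_add_cancel hR]
    · intro j
      have := j.2
      simp only [resSeq, shSeq]
      rw [Function.update_of_ne (by omega)]

theorem iterOp_dual (R : ℕ) (hR : 0 < R) (hrpos : ∀ k, 0 < r k) (hrR : ∀ i, r i ≤ R)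
    (h : (Fin R → Fin d) → ℝ) (t : ℕ) :
    iterOp r pk R t (fun x => h (resSeq R (shSeq t x))) =
      fun x => ((dualOp r pk R hR hrpos)^[t] h) (resSeq R x) := by
  induction t with
  | zero => rfl
  | succ t ih =>
    simp only [iterOp]
    have : (fun x : ℕ → Fin d => h (resSeq R (shSeq (t+1) x))) =
        fun x => (fun y => h (resSeq R (shSeq t y))) (shSeq 1 x) := by
      funext x
      congr 2
    rw [this, iterOp_sh r pk hrR (fun y => h (resSeq R (shSeq t y))) 1 t R le_rfl, ih, Function.iterate_succ_apply']
    exact stepOp_dual r pk R hR hrpos _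

theorem extSeq_snoc (z : Fin d) {T : ℕ} (x : Fin T → Fin d) (e : Fin d) :
    extSeq z (Fin.snoc x e : Fin (T + 1) → Fin d) = Function.update (extSeq z x) T e := by
  funext i
  by_cases h : i = T
  · subst h; simp [extSeq, Fin.snoc]
  · rw [Function.update_of_ne h]
    by_cases h2 : i < T
    · simp [extSeq, Fin.snoc, h2, Nat.lt_succ_of_lt h2]
    · simp [extSeq, h2, show ¬ i < T + 1 by omega]

theorem ngramProb_eq (z : Fin d) (R T : ℕ) (init : (Fin R → Fin d) → ℝ) (h : R ≤ T)
    (x : Fin T → Fin d) : ngramProb d n R T r pk init h x =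
      init (resSeq R (extSeq z x)) *
        ∏ l ∈ Finset.Ico R T, pk (fun k => extSeq z x (l - r k)) (extSeq z x l) := by
  rw [ngramProb, ← Finset.prod_attach (Finset.Ico R T)]
  congr 1
  · congr 1
    funext i
    simp [resSeq, extSeq, lt_of_lt_of_le i.2 h]
  · refine Finset.prod_congr rfl fun l _ => ?_
    have hl := (Finset.mem_Ico.mp l.2).2
    simp only [extSeq, hl, dif_pos]
    congr 1
    funext k
    rw [dif_pos]

theorem resSeq_ext (z : Fin d) {R : ℕ} (Z : Fin R → Fin d) : resSeq R (extSeq z Z) = Z := by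
  funext i
  simp [resSeq, extSeq]

theorem ngram_expect (hrpos : ∀ k, 0 < r k) (z : Fin d) (R : ℕ) (hR : 0 < R) (init : (Fin R → Fin d) → ℝ) (k : ℕ) :
    ∀ (F : (ℕ → Fin d) → ℝ) (h : R ≤ R + k),
    ∑ x : Fin (R + k) → Fin d, ngramProb d n R (R + k) r pk init h x * F (extSeq z x) =
      ∑ Z, init Z * iterOp r pk R k F (extSeq z Z) := by
  induction k with
  | zero =>
    intro F h
    refine Finset.sum_congr rfl fun x _ => ?_
    rw [ngramProb_eq r pk z]
    simp only [add_zero, Finset.Ico_self, Finset.prod_empty, mul_one, iterOp]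
    congr 2
    exact resSeq_ext z x
  | succ k ih =>
    intro F h
    rw [iterOp_comp r pk k 1, ← ih _ (by omega)]
    simp only [iterOp]
    simp only [ngramProb_eq r pk z]
    change ∑ x : Fin (R + k + 1) → Fin d, _ = _
    rw [← (Fin.snocEquiv (fun _ : Fin (R + k + 1) => Fin d)).sum_comp, Fintype.sum_prod_type,
      Finset.sum_comm]
    refine Finset.sum_congr rfl fun x _ => ?_
    rw [stepOp, Finset.mul_sum]
    refine Finset.sum_congr rfl fun e _ => ?_
    simp only [Fin.snocEquiv, Equiv.coe_fn_mk]
    rw [extSeq_snoc, ← add_assoc, Finset.prod_Ico_succ_top (by omega), Function.update_self]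
    have h1 : resSeq R (Function.update (extSeq z x) (R + k) e) = resSeq R (extSeq z x) := by
      funext i
      have := i.2
      simp only [resSeq]
      rw [Function.update_of_ne (by omega)]
    have h2 : ∀ l ∈ Finset.Ico R (R + k),
        pk (fun j => Function.update (extSeq z x) (R + k) e (l - r j))
          (Function.update (extSeq z x) (R + k) e l) =
        pk (fun j => extSeq z x (l - r j)) (extSeq z x l) := by
      intro l hl
      have hl := Finset.mem_Ico.mp hl
      rw [Function.update_of_ne (by omega)]
      congr 1
      funext j
      rw [Function.update_of_ne (by omega)]
    have h3 : (fun j => Function.update (extSeq z x) (R + k) e (R + k - r j)) =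
        fun j => extSeq z x (R + k - r j) := by
      funext j
      have := hrpos j
      rw [Function.update_of_ne (by omega)]
    rw [h1, Finset.prod_congr rfl h2, h3]
    ring

theorem iterOp_far (z : Fin d) (R M : ℕ) (hR : 0 < R) (hrpos : ∀ k, 0 < r k)
    (hrR : ∀ i, r i ≤ R) (hpk1 : ∀ Y, ∑ e, pk Y e = 1) (hRM : R ≤ M)
    (D : (ℕ → Fin d) → ℝ) (hD : DepLt (M + 1) D) (i k e : ℕ) :
    iterOp r pk R ((M + i + 1 - R) + ((R + k) + ((M + 1 - R) + e)))
      (fun x => D (shSeq i x) * D (shSeq (i + M + 1 + k) x)) =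
    iterOp r pk R (M + i + 1 - R) (fun x => D (shSeq i x) *
      ((dualOp r pk R hR hrpos)^[R + k] (fun Z => iterOp r pk R (M + 1 - R) D (extSeq z Z)))
        (resSeq R (shSeq (M + i + 1 - R) x))) := by
  have hsh : ∀ a b (x : ℕ → Fin d), shSeq (a + b) x = shSeq a (shSeq b x) := by
    intro a b x; funext j; simp [shSeq, add_assoc]
  rw [iterOp_comp]
  congr 1
  rw [iterOp_pull]
  · funext x
    congr 1
    set q := M + i + 1 - R with hq
    have e1 : (fun x : ℕ → Fin d => D (shSeq (i + M + 1 + k) x)) =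
        fun x => (fun y => D (shSeq (R + k) y)) (shSeq q x) := by
      funext x
      change _ = D (shSeq (R + k) (shSeq q x))
      rw [← hsh]
      congr 2
      omega
    rw [e1, iterOp_sh r pk hrR (fun y => D (shSeq (R + k) y)) q _ R le_rfl]
    rw [iterOp_comp, iterOp_sh r pk hrR D (R + k) _ R le_rfl]
    rw [iterOp_comp r pk (M + 1 - R) e, iterOp_triv r pk hpk1 (G := D) e _ (hD.mono (by omega))]
    have e2 : (fun x : ℕ → Fin d => iterOp r pk R (M + 1 - R) D (shSeq (R + k) x)) =
        fun x => (fun Z => iterOp r pk R (M + 1 - R) D (extSeq z Z))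
          (resSeq R (shSeq (R + k) x)) := by
      funext x
      apply iterOp_dep r pk hrpos _ _ hR (hD.mono (by omega))
      intro j hj
      simp [extSeq, resSeq, hj]
    rw [e2, iterOp_dual r pk R hR hrpos hrR
      (fun Z => iterOp r pk R (M + 1 - R) D (extSeq z Z)) (R + k)]
  · intro x y hxy
    apply hD
    intro j hj
    exact hxy _ (by omega)

section spectral

variable (R : ℕ) (hR : 0 < R) (hrpos : ∀ k, 0 < r k) (μ : (Fin R → Fin d) → ℝ)

theorem windowMatrix_nonneg (hpk0 : ∀ Y e, 0 ≤ pk Y e) (Z' Z : Fin R → Fin d) :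
    0 ≤ windowMatrix d n R hR r hrpos pk Z' Z := by
  simp only [windowMatrix, Matrix.of_apply]
  split_ifs
  · exact hpk0 _ _
  · exact le_rfl

theorem windowMatrix_col (hd : 0 < d) (hpk1 : ∀ Y, ∑ e, pk Y e = 1) (Z : Fin R → Fin d) :
    ∑ Z', windowMatrix d n R hR r hrpos pk Z' Z = 1 := by
  have h := congrFun (stepOp_dual r pk R hR hrpos (fun _ => 1)) (extSeq ⟨0, hd⟩ Z)
  simp only [stepOp, mul_one, hpk1, dualOp, resSeq_ext] at h
  exact h.symm

theorem dualOp_jensen (hd : 0 < d) (hpk0 : ∀ Y e, 0 ≤ pk Y e) (hpk1 : ∀ Y, ∑ e, pk Y e = 1)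
    (h : (Fin R → Fin d) → ℝ) (Z : Fin R → Fin d) :
    (dualOp r pk R hR hrpos h Z) ^ 2 ≤ dualOp r pk R hR hrpos (fun Z => h Z ^ 2) Z := by
  have hP := fun Z' => windowMatrix_nonneg r pk R hR hrpos hpk0 Z' Z
  have hc := windowMatrix_col r pk R hR hrpos hd hpk1 Z
  simp only [dualOp]
  set c := ∑ Z', windowMatrix d n R hR r hrpos pk Z' Z * h Z' with hcdef
  have h0 : 0 ≤ ∑ Z', windowMatrix d n R hR r hrpos pk Z' Z * (h Z' - c) ^ 2 :=
    Finset.sum_nonneg fun Z' _ => mul_nonneg (hP Z') (sq_nonneg _)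
  have h1 : ∑ Z', windowMatrix d n R hR r hrpos pk Z' Z * (h Z' - c) ^ 2 =
      ∑ Z', windowMatrix d n R hR r hrpos pk Z' Z * h Z' ^ 2 - 2 * c * c + c ^ 2 * 1 := by
    have e : ∀ Z', windowMatrix d n R hR r hrpos pk Z' Z * (h Z' - c) ^ 2 =
        windowMatrix d n R hR r hrpos pk Z' Z * h Z' ^ 2 -
          2 * c * (windowMatrix d n R hR r hrpos pk Z' Z * h Z') +
          c ^ 2 * windowMatrix d n R hR r hrpos pk Z' Z := fun Z' => by ring
    simp only [e]
    rw [Finset.sum_add_distrib, Finset.sum_sub_distrib, ← Finset.mul_sum, ← Finset.mul_sum,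
      hc, ← hcdef]
  nlinarith

theorem dualOp_mean (hstat : ∀ Z', μ Z' = ∑ Z, windowMatrix d n R hR r hrpos pk Z' Z * μ Z)
    (h : (Fin R → Fin d) → ℝ) :
    ∑ Z, μ Z * dualOp r pk R hR hrpos h Z = ∑ Z, μ Z * h Z := by
  simp only [dualOp, Finset.mul_sum]
  rw [Finset.sum_comm]
  refine Finset.sum_congr rfl fun Z' _ => ?_
  rw [hstat Z', Finset.sum_mul]
  exact Finset.sum_congr rfl fun _ _ => by ring

theorem dualOp_sq_iter (hd : 0 < d) (hpk0 : ∀ Y e, 0 ≤ pk Y e) (hpk1 : ∀ Y, ∑ e, pk Y e = 1)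
    (hμpos : ∀ Z, 0 < μ Z)
    (hstat : ∀ Z', μ Z' = ∑ Z, windowMatrix d n R hR r hrpos pk Z' Z * μ Z)
    (h : (Fin R → Fin d) → ℝ) (q : ℕ) :
    ∑ Z, μ Z * ((dualOp r pk R hR hrpos)^[q] h) Z ^ 2 ≤ ∑ Z, μ Z * h Z ^ 2 := by
  induction q with
  | zero => exact le_rfl
  | succ q ih =>
    refine le_trans ?_ ih
    rw [Function.iterate_succ_apply',
      ← dualOp_mean r pk R hR hrpos μ hstat (fun Z => ((dualOp r pk R hR hrpos)^[q] h) Z ^ 2)]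
    exact Finset.sum_le_sum fun Z _ =>
      mul_le_mul_of_nonneg_left (dualOp_jensen r pk R hR hrpos hd hpk0 hpk1 _ Z) (hμpos Z).le

theorem dualOp_contract (hμpos : ∀ Z, 0 < μ Z) (lam : ℝ) (hlam0 : 0 ≤ lam)
    (hop : ∀ v : (Fin R → Fin d) → ℝ,
      Real.sqrt (∑ Z', Matrix.mulVec (specA d n R hR r hrpos pk μ) v Z' ^ 2)
        ≤ lam * Real.sqrt (∑ Z, v Z ^ 2))
    (h : (Fin R → Fin d) → ℝ) (h0 : ∑ Z, μ Z * h Z = 0) :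
    ∑ Z, μ Z * dualOp r pk R hR hrpos h Z ^ 2 ≤ lam ^ 2 * ∑ Z, μ Z * h Z ^ 2 := by
  set A := specA d n R hR r hrpos pk μ with hA
  set u : (Fin R → Fin d) → ℝ := fun Z => Real.sqrt (μ Z) * h Z with hu
  set v : (Fin R → Fin d) → ℝ := fun Z => Real.sqrt (μ Z) * dualOp r pk R hR hrpos h Z with hv
  have hs : ∀ Z, Real.sqrt (μ Z) ^ 2 = μ Z := fun Z => Real.sq_sqrt (hμpos Z).le
  have hsp : ∀ Z, 0 < Real.sqrt (μ Z) := fun Z => Real.sqrt_pos.2 (hμpos Z)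
  have hAe : ∀ Z' Z, A Z' Z = (Real.sqrt (μ Z'))⁻¹ * windowMatrix d n R hR r hrpos pk Z' Z *
      Real.sqrt (μ Z) - Real.sqrt (μ Z') * Real.sqrt (μ Z) := by
    intro Z' Z
    simp [hA, specA, Matrix.sub_apply, Matrix.vecMulVec_apply, Matrix.mul_diagonal,
      Matrix.diagonal_mul]
  have hvA : ∀ Z, v Z = ∑ Z', A Z' Z * u Z' := by
    intro Z
    have : ∀ Z', A Z' Z * u Z' = Real.sqrt (μ Z) *
        (windowMatrix d n R hR r hrpos pk Z' Z * h Z') - Real.sqrt (μ Z) * (μ Z' * h Z') := by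
      intro Z'
      have hne := (hsp Z').ne'
      have hs' := hs Z'
      rw [hAe]
      simp only [hu]
      generalize Real.sqrt (μ Z') = a at hne hs' ⊢
      rw [← hs']
      field_simp
    rw [Finset.sum_congr rfl fun Z' _ => this Z', Finset.sum_sub_distrib, ← Finset.mul_sum,
      ← Finset.mul_sum, h0]
    simp [hv, dualOp]
  have hvv : ∑ Z, v Z ^ 2 = ∑ Z', u Z' * Matrix.mulVec A v Z' := by
    simp only [Matrix.mulVec, dotProduct, Finset.mul_sum]
    rw [Finset.sum_comm]
    refine Finset.sum_congr rfl fun Z _ => ?_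
    rw [sq]
    nth_rewrite 1 [hvA]
    rw [Finset.sum_mul]
    exact Finset.sum_congr rfl fun _ _ => by ring
  have e1 : ∑ Z, μ Z * dualOp r pk R hR hrpos h Z ^ 2 = ∑ Z, v Z ^ 2 :=
    Finset.sum_congr rfl fun Z _ => by rw [hv]; simp only [mul_pow, hs]
  have e2 : ∑ Z, μ Z * h Z ^ 2 = ∑ Z, u Z ^ 2 :=
    Finset.sum_congr rfl fun Z _ => by rw [hu]; simp only [mul_pow, hs]
  rw [e1, e2]
  have hcs := Real.sum_mul_le_sqrt_mul_sqrt Finset.univ u (Matrix.mulVec A v)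
  rw [← hvv] at hcs
  have hop' := hop v
  have hV : 0 ≤ ∑ Z, v Z ^ 2 := Finset.sum_nonneg fun _ _ => sq_nonneg _
  have hU : 0 ≤ ∑ Z, u Z ^ 2 := Finset.sum_nonneg fun _ _ => sq_nonneg _
  set a := Real.sqrt (∑ Z, v Z ^ 2) with ha
  set b := Real.sqrt (∑ Z, u Z ^ 2) with hb
  have ha2 : ∑ Z, v Z ^ 2 = a ^ 2 := (Real.sq_sqrt hV).symm
  have hb2 : ∑ Z, u Z ^ 2 = b ^ 2 := (Real.sq_sqrt hU).symm
  have ha0 : 0 ≤ a := Real.sqrt_nonneg _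
  have hb0 : 0 ≤ b := Real.sqrt_nonneg _
  rw [ha2] at hcs ⊢
  rw [hb2, ← mul_pow]
  have h3 : a * a ≤ (lam * b) * a := by
    calc a * a = a ^ 2 := by ring
      _ ≤ _ := hcs
      _ ≤ b * (lam * a) := mul_le_mul_of_nonneg_left hop' hb0
      _ = _ := by ring
  rcases ha0.eq_or_lt with h | h
  · rw [← h]
    rw [zero_pow (by norm_num)]
    exact sq_nonneg _
  · exact pow_le_pow_left₀ ha0 (le_of_mul_le_mul_right h3 h) 2

theorem dualOp_contract_iter (hμpos : ∀ Z, 0 < μ Z)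
    (hstat : ∀ Z', μ Z' = ∑ Z, windowMatrix d n R hR r hrpos pk Z' Z * μ Z)
    (lam : ℝ) (hlam0 : 0 ≤ lam)
    (hop : ∀ v : (Fin R → Fin d) → ℝ,
      Real.sqrt (∑ Z', Matrix.mulVec (specA d n R hR r hrpos pk μ) v Z' ^ 2)
        ≤ lam * Real.sqrt (∑ Z, v Z ^ 2))
    (h : (Fin R → Fin d) → ℝ) (h0 : ∑ Z, μ Z * h Z = 0) (t : ℕ) :
    ∑ Z, μ Z * ((dualOp r pk R hR hrpos)^[t] h) Z = 0 ∧
    ∑ Z, μ Z * ((dualOp r pk R hR hrpos)^[t] h) Z ^ 2 ≤ (lam ^ t) ^ 2 * ∑ Z, μ Z * h Z ^ 2 := by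
  induction t with
  | zero => simpa using h0
  | succ t ih =>
    rw [Function.iterate_succ_apply']
    refine ⟨by rw [dualOp_mean r pk R hR hrpos μ hstat]; exact ih.1, ?_⟩
    refine (dualOp_contract r pk R hR hrpos μ hμpos lam hlam0 hop _ ih.1).trans ?_
    calc _ ≤ lam ^ 2 * ((lam ^ t) ^ 2 * ∑ Z, μ Z * h Z ^ 2) :=
          mul_le_mul_of_nonneg_left ih.2 (sq_nonneg _)
      _ = _ := by ring

end spectral

theorem geom_part (N : ℕ) (C lam : ℝ) (hC : 0 ≤ C) (h0 : 0 ≤ lam) (h1 : lam < 1)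
    (p : ℕ → Prop) [DecidablePred p] (g : ℕ → ℕ) (hg : ∀ j < N, p j → g j < N)
    (hinj : ∀ i j, i < N → j < N → p i → p j → g i = g j → i = j) :
    ∑ j ∈ Finset.range N, (if p j then C * lam ^ g j else 0) ≤ C * (1 - lam)⁻¹ := by
  rw [← Finset.sum_filter, ← Finset.mul_sum]
  refine mul_le_mul_of_nonneg_left ?_ hC
  rw [← Finset.sum_image (f := fun k => lam ^ k) (g := g) (by
    intro i hi j hj hij
    simp at hi hj
    exact hinj i j hi.1 hj.1 hi.2 hj.2 hij)]
  calc _ ≤ ∑ k ∈ Finset.range N, lam ^ k := by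
        refine Finset.sum_le_sum_of_subset_of_nonneg ?_ fun _ _ _ => pow_nonneg h0 _
        intro k hk
        simp only [Finset.mem_image, Finset.mem_filter, Finset.mem_range] at hk ⊢
        obtain ⟨j, hj, rfl⟩ := hk
        exact hg j hj.1 hj.2
    _ ≤ (1 - lam)⁻¹ := by
        have h2 : 0 < 1 - lam := by linarith
        rw [← one_div, le_div_iff₀ h2]
        have := mul_neg_geom_sum lam N
        have := pow_nonneg h0 N
        linarith

theorem count_bound (N M : ℕ) (C lam : ℝ) (hC : 0 ≤ C) (h0 : 0 ≤ lam) (h1 : lam < 1)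
    (c : ℕ → ℕ → ℝ) (hsym : ∀ i j, c i j = c j i) (hnear : ∀ i j, c i j ≤ 2)
    (hfar : ∀ i k, i + M + 1 + k < N → c i (i + M + 1 + k) ≤ C * lam ^ k) :
    ∑ i ∈ Finset.range N, ∑ j ∈ Finset.range N, c i j ≤
      N * (2 * (2 * M + 1) + 2 * (C * (1 - lam)⁻¹)) := by
  have key : ∀ i ∈ Finset.range N, ∑ j ∈ Finset.range N, c i j ≤
      2 * (2 * M + 1) + 2 * (C * (1 - lam)⁻¹) := by
    intro i hi
    have hi := Finset.mem_range.1 hi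
    have hb : ∀ j ∈ Finset.range N, c i j ≤ (if j ≤ i + M ∧ i ≤ j + M then 2 else 0) +
        (if i + M < j then C * lam ^ (j - i - M - 1) else 0) +
        (if j + M < i then C * lam ^ (i - j - M - 1) else 0) := by
      intro j hj
      have hj := Finset.mem_range.1 hj
      by_cases ha : i + M < j
      · rw [if_neg (by omega), if_pos ha, if_neg (by omega)]
        have := hfar i (j - i - M - 1) (by omega)
        rw [show i + M + 1 + (j - i - M - 1) = j by omega] at this
        linarith
      · by_cases hb : j + M < i
        · rw [if_neg (by omega), if_neg ha, if_pos hb, hsym]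
          have := hfar j (i - j - M - 1) (by omega)
          rw [show j + M + 1 + (i - j - M - 1) = i by omega] at this
          linarith
        · rw [if_pos (by omega), if_neg ha, if_neg hb]
          have := hnear i j
          linarith
    refine (Finset.sum_le_sum hb).trans ?_
    rw [Finset.sum_add_distrib, Finset.sum_add_distrib]
    have g1 := geom_part N C lam hC h0 h1 (fun j => i + M < j) (fun j => j - i - M - 1)
      (by intros; omega) (by intros; omega)
    have g2 := geom_part N C lam hC h0 h1 (fun j => j + M < i) (fun j => i - j - M - 1)
      (by intros; omega) (by intros; omega)
    have g3 : ∑ j ∈ Finset.range N, (if j ≤ i + M ∧ i ≤ j + M then (2:ℝ) else 0) ≤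
        2 * (2 * M + 1) := by
      rw [← Finset.sum_filter, Finset.sum_const, nsmul_eq_mul]
      have : (Finset.filter (fun j => j ≤ i + M ∧ i ≤ j + M) (Finset.range N)).card ≤
          2 * M + 1 := by
        refine (Finset.card_le_card (t := Finset.Icc (i - M) (i + M)) ?_).trans ?_
        · intro j hj
          simp at hj ⊢
          omega
        · simp; omega
      have : ((Finset.filter (fun j => j ≤ i + M ∧ i ≤ j + M) (Finset.range N)).card : ℝ) ≤
          2 * M + 1 := by exact_mod_cast this
      linarith
    linarith
  refine (Finset.sum_le_sum key).trans ?_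
  rw [Finset.sum_const, Finset.card_range, nsmul_eq_mul]

theorem delta_inner {W : Type*} [Fintype W] [DecidableEq W] (ν : W → ℝ) (hν : ∀ w, 0 ≤ ν w)
    (a b : W) :
    ∑ w, ((if a = w then (1:ℝ) else 0) - ν w) * ((if b = w then (1:ℝ) else 0) - ν w) ≤
      1 + ∑ w, ν w ^ 2 := by
  have : ∀ w, ((if a = w then (1:ℝ) else 0) - ν w) * ((if b = w then (1:ℝ) else 0) - ν w) ≤
      (if a = w then (1:ℝ) else 0) + ν w ^ 2 := by
    intro w
    have := hν w
    split_ifs <;> nlinarith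
  refine (Finset.sum_le_sum fun w _ => this w).trans ?_
  rw [Finset.sum_add_distrib]
  simp

end NGramHelpers

/-- The expected χ²-divergence of the empirical distribution of windows
`Y_{M+1},…,Y_L` from the stationary window marginal `ν` is at most
`(4(1−λ)⁻¹√(D₀+1) + 16M)/(L·min ν)`. -/
theorem statement7
    (d n R M L : ℕ) (hd : 0 < d) (hn : 0 < n) (hR : 0 < R)
    (r : Fin n → ℕ) (hrpos : ∀ i, 0 < r i) (hrmono : StrictMono r)
    (hrR : ∀ i, r i ≤ R) (hRmax : ∃ i, r i = R)
    (pk : (Fin n → Fin d) → Fin d → ℝ)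
    (hpk0 : ∀ Y e, 0 ≤ pk Y e) (hpk1 : ∀ Y, ∑ e, pk Y e = 1)
    (μ0 : (Fin R → Fin d) → ℝ) (hμ00 : ∀ Z, 0 ≤ μ0 Z) (hμ01 : ∑ Z, μ0 Z = 1)
    (μ : (Fin R → Fin d) → ℝ) (hμpos : ∀ Z, 0 < μ Z) (hμ1 : ∑ Z, μ Z = 1)
    (hstat : ∀ Z', μ Z' = ∑ Z, windowMatrix d n R hR r hrpos pk Z' Z * μ Z)
    (lam : ℝ) (hlam0 : 0 ≤ lam) (hlam1 : lam < 1)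
    (hop : ∀ v : (Fin R → Fin d) → ℝ,
      Real.sqrt (∑ Z', Matrix.mulVec (specA d n R hR r hrpos pk μ) v Z' ^ 2)
        ≤ lam * Real.sqrt (∑ Z, v Z ^ 2))
    (hRM : R ≤ M) (hML : 2 * M ≤ L)
    (S : Finset ℕ) (hS : ∀ s ∈ S, 1 ≤ s ∧ s ≤ M)
    (m : ℝ) (hm0 : 0 < m)
    (hmle : ∀ w, m ≤ windowLaw d (M + 1) S (ngramProb d n R (M + 1) r pk μ (by omega)) M
        (Nat.lt_succ_self M) w)
    (hmmem : ∃ w, windowLaw d (M + 1) S (ngramProb d n R (M + 1) r pk μ (by omega)) M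
        (Nat.lt_succ_self M) w = m) :
    ∑ x : Fin (L + 1) → Fin d,
        ngramProb d n R (L + 1) r pk μ0 (by omega) x *
          chiSq
            (fun w =>
              (∑ l ∈ (Finset.Ico M L).attach,
                  if window d (L + 1) S x l.1 (icoLtSucc l) = w then (1 : ℝ) else 0) /
                ((L : ℝ) - M))
            (windowLaw d (M + 1) S (ngramProb d n R (M + 1) r pk μ (by omega)) M
              (Nat.lt_succ_self M))
      ≤ (4 * (1 - lam)⁻¹ * Real.sqrt (chiSq μ0 μ + 1) + 16 * M) / (L * m) := by
  classical
  have hz : Fin d := ⟨0, hd⟩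
  set ν := windowLaw d (M + 1) S (ngramProb d n R (M + 1) r pk μ (by omega)) M
    (Nat.lt_succ_self M) with hνdef
  have hνpos : ∀ w, 0 < ν w := fun w => lt_of_lt_of_le hm0 (hmle w)
  -- windows on infinite sequences
  let win : (ℕ → Fin d) → Fin d × ({s // s ∈ S} → Fin d) := fun x => (x M, fun s => x (M - s.1))
  have hwin : ∀ x y : ℕ → Fin d, (∀ i < M + 1, x i = y i) → win x = win y := by
    intro x y h
    simp only [win]
    rw [h M (by omega)]
    congr 1
    funext s
    exact h _ (by omega)
  have hwext : ∀ (T j : ℕ) (x : Fin T → Fin d) (h : M + j < T),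
      window d T S x (M + j) h = win (shSeq j (extSeq hz x)) := by
    intro T j x h
    simp only [window, win, parents, shSeq, extSeq, h, dif_pos]
    congr 1
    funext s
    have := (hS s.1 s.2).2
    rw [dif_pos (by omega)]
    simp only [parents]
    congr 2
    omega
  let Φ : Fin d × ({s // s ∈ S} → Fin d) → (ℕ → Fin d) → ℝ :=
    fun w x => if win x = w then 1 else 0
  let D : Fin d × ({s // s ∈ S} → Fin d) → (ℕ → Fin d) → ℝ := fun w x => Φ w x - ν w
  have hΦ : ∀ w, DepLt (M + 1) (Φ w) := by
    intro w x y h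
    simp only [Φ, hwin x y h]
  have hD : ∀ w, DepLt (M + 1) (D w) := by
    intro w x y h
    simp only [D, hΦ w x y h]
  let f : Fin d × ({s // s ∈ S} → Fin d) → (Fin R → Fin d) → ℝ :=
    fun w Z => iterOp r pk R (M + 1 - R) (Φ w) (extSeq hz Z)
  have hf0 : ∀ w Z, 0 ≤ f w Z := by
    intro w Z
    have h0 : iterOp r pk R (M + 1 - R) (fun _ => (0 : ℝ)) = fun _ => 0 :=
      iterOp_triv r pk hpk1 _ _ (fun _ _ _ => rfl)
    have := iterOp_mono r pk hpk0 (F := fun _ => 0) (G := Φ w)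
      (by intro x; simp only [Φ]; split_ifs <;> norm_num) (M + 1 - R) R (extSeq hz Z)
    rw [h0] at this
    exact this
  have hf1 : ∀ w Z, f w Z ≤ 1 := by
    intro w Z
    have := iterOp_mono r pk hpk0 (F := Φ w) (G := fun _ => 1)
      (by intro x; simp only [Φ]; split_ifs <;> norm_num) (M + 1 - R) R (extSeq hz Z)
    rw [iterOp_one r pk hpk1] at this
    exact this
  have hexp : ∀ (init : (Fin R → Fin d) → ℝ) (T : ℕ) (hT : R ≤ T) (F : (ℕ → Fin d) → ℝ),
      ∑ x : Fin T → Fin d, ngramProb d n R T r pk init hT x * F (extSeq hz x) =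
        ∑ Z, init Z * iterOp r pk R (T - R) F (extSeq hz Z) := by
    intro init T hT F
    obtain ⟨k, rfl⟩ := Nat.exists_eq_add_of_le hT
    rw [Nat.add_sub_cancel_left]
    exact ngram_expect r pk hrpos hz R hR init k F hT
  have hfν : ∀ w, ∑ Z, μ Z * f w Z = ν w := by
    intro w
    rw [← hexp μ (M + 1) (by omega) (Φ w)]
    simp only [hνdef, windowLaw]
    refine Finset.sum_congr rfl fun x _ => ?_
    rw [show window d (M + 1) S x M (Nat.lt_succ_self M) = win (extSeq hz x) from
      hwext (M + 1) 0 x (Nat.lt_succ_self M)]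
    simp only [Φ, mul_ite, mul_one, mul_zero]
  have hfsum : ∀ Z, ∑ w, f w Z = 1 := by
    intro Z
    have h := congrFun (iterOp_sum r pk Finset.univ Φ (M + 1 - R) R) (extSeq hz Z)
    have h2 : (fun x => ∑ w, Φ w x) = fun _ => (1 : ℝ) := by
      funext x
      simp [Φ]
    rw [h2, iterOp_one r pk hpk1] at h
    exact h.symm
  have hνsum : ∑ w, ν w = 1 := by
    simp only [← hfν]
    rw [Finset.sum_comm]
    simp only [← Finset.mul_sum, hfsum, mul_one, hμ1]
  set s := ∑ w, ν w ^ 2 with hs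
  have hs0 : 0 ≤ s := Finset.sum_nonneg fun _ _ => sq_nonneg _
  have hν1 : ∀ w, ν w ≤ 1 := by
    intro w
    rw [← hνsum]
    exact Finset.single_le_sum (fun i _ => (hνpos i).le) (Finset.mem_univ w)
  have hs1 : s ≤ 1 := by
    rw [← hνsum]
    exact Finset.sum_le_sum fun w _ => by nlinarith [hνpos w, hν1 w]
  let h : Fin d × ({s // s ∈ S} → Fin d) → (Fin R → Fin d) → ℝ :=
    fun w Z => iterOp r pk R (M + 1 - R) (D w) (extSeq hz Z)
  have hhf : ∀ w Z, h w Z = f w Z - ν w := by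
    intro w Z
    simp only [h, D, f]
    rw [iterOp_sub, iterOp_triv r pk hpk1 (G := fun _ => ν w) _ _ (fun _ _ _ => rfl)]
  have hh0 : ∀ w, ∑ Z, μ Z * h w Z = 0 := by
    intro w
    simp only [hhf, mul_sub, Finset.sum_sub_distrib, hfν, ← Finset.sum_mul, hμ1, one_mul, sub_self]
  have hh2 : ∀ w, ∑ Z, μ Z * h w Z ^ 2 ≤ ν w - ν w ^ 2 := by
    intro w
    have e : ∀ Z, μ Z * h w Z ^ 2 ≤ μ Z * f w Z - 2 * ν w * (μ Z * f w Z) + ν w ^ 2 * μ Z := by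
      intro Z
      rw [hhf]
      have := mul_nonneg (hμpos Z).le (mul_nonneg (hf0 w Z) (sub_nonneg.2 (hf1 w Z)))
      nlinarith
    refine (Finset.sum_le_sum fun Z _ => e Z).trans ?_
    rw [Finset.sum_add_distrib, Finset.sum_sub_distrib, ← Finset.mul_sum, ← Finset.mul_sum, hfν,
      hμ1]
    apply le_of_eq
    ring
  have hchi : ∑ Z, μ0 Z ^ 2 / μ Z = chiSq μ0 μ + 1 := by
    have e : ∀ Z, (μ0 Z - μ Z) ^ 2 / μ Z = μ0 Z ^ 2 / μ Z - 2 * μ0 Z + μ Z := by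
      intro Z
      have := (hμpos Z).ne'
      field_simp
      ring
    simp only [chiSq, e, Finset.sum_add_distrib, Finset.sum_sub_distrib, ← Finset.mul_sum, hμ01,
      hμ1]
    ring
  set C := Real.sqrt (chiSq μ0 μ + 1) with hC
  have hC0 : 0 ≤ C := Real.sqrt_nonneg _
  -- the expectation functional
  let E : ((ℕ → Fin d) → ℝ) → ℝ := fun F =>
    ∑ Z, μ0 Z * iterOp r pk R (L + 1 - R) F (extSeq hz Z)
  have hEmono : ∀ F G : (ℕ → Fin d) → ℝ, (∀ x, F x ≤ G x) → E F ≤ E G := fun F G hFG =>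
    Finset.sum_le_sum fun Z _ =>
      mul_le_mul_of_nonneg_left (iterOp_mono r pk hpk0 hFG _ _ _) (hμ00 Z)
  have hEconst : ∀ c : ℝ, E (fun _ => c) = c := by
    intro c
    simp only [E]
    rw [iterOp_triv r pk hpk1 (G := fun _ => c) _ _ (fun _ _ _ => rfl), ← Finset.sum_mul, hμ01,
      one_mul]
  have hEsum : ∀ (F : ℕ → (ℕ → Fin d) → ℝ) (t : Finset ℕ),
      E (fun x => ∑ i ∈ t, F i x) = ∑ i ∈ t, E (F i) := by
    intro F t
    simp only [E]
    rw [iterOp_sum]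
    simp only [Finset.mul_sum]
    rw [Finset.sum_comm]
  have hEmul : ∀ (c : ℝ) (F : (ℕ → Fin d) → ℝ), E (fun x => c * F x) = c * E F := by
    intro c F
    simp only [E]
    rw [iterOp_pull r pk (G := fun _ => c) F _ _ (fun _ _ _ => rfl), Finset.mul_sum]
    exact Finset.sum_congr rfl fun _ _ => by ring
  let c : ℕ → ℕ → ℝ := fun i j => E (fun x => ∑ w, D w (shSeq i x) * D w (shSeq j x))
  have hnear : ∀ i j, c i j ≤ 2 := by
    intro i j
    rw [← hEconst 2]
    refine hEmono _ _ fun x => ?_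
    have := delta_inner ν (fun w => (hνpos w).le) (win (shSeq i x)) (win (shSeq j x))
    simp only [D, Φ]
    linarith
  have hsym : ∀ i j, c i j = c j i := by
    intro i j
    simp only [c]
    congr 1
    funext x
    exact Finset.sum_congr rfl fun _ _ => mul_comm _ _
  have hfar : ∀ i k, i + M + 1 + k < L - M → c i (i + M + 1 + k) ≤ C * lam ^ k := by
    intro i k hik
    set q := M + i + 1 - R with hq
    set Tq := dualOp r pk R hR hrpos with hTq
    let g : Fin d × ({s // s ∈ S} → Fin d) → (Fin R → Fin d) → ℝ := fun w => Tq^[R + k] (h w)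
    let G : (Fin R → Fin d) → ℝ := fun Z => Real.sqrt (1 + s) * Real.sqrt (∑ w, g w Z ^ 2)
    obtain ⟨e, he⟩ : ∃ e, L + 1 - R = q + ((R + k) + ((M + 1 - R) + e)) :=
      ⟨L + 1 - R - (q + ((R + k) + (M + 1 - R))), by omega⟩
    have h1 : iterOp r pk R (L + 1 - R)
        (fun x => ∑ w, D w (shSeq i x) * D w (shSeq (i + M + 1 + k) x)) =
        iterOp r pk R q (fun x => ∑ w, D w (shSeq i x) * g w (resSeq R (shSeq q x))) := by
      rw [he, iterOp_sum, iterOp_sum]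
      funext x
      refine Finset.sum_congr rfl fun w _ => ?_
      exact congrFun (iterOp_far r pk hz R M hR hrpos hrR hpk1 hRM (D w) (hD w) i k e) x
    have h2 : ∀ x : ℕ → Fin d, ∑ w, D w (shSeq i x) * g w (resSeq R (shSeq q x)) ≤
        G (resSeq R (shSeq q x)) := by
      intro x
      refine (Real.sum_mul_le_sqrt_mul_sqrt _ _ _).trans ?_
      refine mul_le_mul_of_nonneg_right (Real.sqrt_le_sqrt ?_) (Real.sqrt_nonneg _)
      have := delta_inner ν (fun w => (hνpos w).le) (win (shSeq i x)) (win (shSeq i x))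
      simp only [D, Φ, sq] at this ⊢
      simpa only [hs, sq] using this
    have h3 : c i (i + M + 1 + k) ≤ ∑ Z, μ0 Z * (Tq^[q] G) Z := by
      simp only [c, E]
      rw [h1]
      refine Finset.sum_le_sum fun Z _ => mul_le_mul_of_nonneg_left ?_ (hμ00 Z)
      refine (iterOp_mono r pk hpk0 h2 q R _).trans (le_of_eq ?_)
      rw [iterOp_dual r pk R hR hrpos hrR G q]
      simp only [resSeq_ext, hTq]
    have h4 : ∑ Z, μ0 Z * (Tq^[q] G) Z ≤ C * Real.sqrt (∑ Z, μ Z * (Tq^[q] G) Z ^ 2) := by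
      have := Real.sum_mul_le_sqrt_mul_sqrt Finset.univ (fun Z => μ0 Z / Real.sqrt (μ Z))
        (fun Z => Real.sqrt (μ Z) * (Tq^[q] G) Z)
      have e1 : ∀ Z, μ0 Z / Real.sqrt (μ Z) * (Real.sqrt (μ Z) * (Tq^[q] G) Z) =
          μ0 Z * (Tq^[q] G) Z := by
        intro Z
        have := (Real.sqrt_pos.2 (hμpos Z)).ne'
        field_simp
      simp only [e1, div_pow, mul_pow, Real.sq_sqrt (hμpos _).le] at this
      rw [hchi] at this
      exact this
    have h5 : ∑ Z, μ Z * (Tq^[q] G) Z ^ 2 ≤ (lam ^ k) ^ 2 := by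
      refine (dualOp_sq_iter r pk R hR hrpos μ hd hpk0 hpk1 hμpos hstat G q).trans ?_
      have e1 : ∀ Z, μ Z * G Z ^ 2 = (1 + s) * ∑ w, μ Z * g w Z ^ 2 := by
        intro Z
        simp only [G]
        rw [mul_pow, Real.sq_sqrt (by linarith),
          Real.sq_sqrt (Finset.sum_nonneg fun _ _ => sq_nonneg _), ← Finset.mul_sum]
        ring
      simp only [e1]
      rw [← Finset.mul_sum, Finset.sum_comm]
      have e2 : ∑ w, ∑ Z, μ Z * g w Z ^ 2 ≤ (lam ^ (R + k)) ^ 2 * (1 - s) := by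
        calc _ ≤ ∑ w, (lam ^ (R + k)) ^ 2 * (ν w - ν w ^ 2) := by
              refine Finset.sum_le_sum fun w _ => ?_
              refine (dualOp_contract_iter r pk R hR hrpos μ hμpos hstat lam hlam0 hop (h w)
                (hh0 w) (R + k)).2.trans ?_
              exact mul_le_mul_of_nonneg_left (hh2 w) (sq_nonneg _)
          _ = _ := by rw [← Finset.mul_sum, Finset.sum_sub_distrib, hνsum]
      have e3 : lam ^ (R + k) ≤ lam ^ k := pow_le_pow_of_le_one hlam0 hlam1.le (by omega)
      have e4 : (lam ^ (R + k)) ^ 2 ≤ (lam ^ k) ^ 2 :=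
        pow_le_pow_left₀ (pow_nonneg hlam0 _) e3 2
      calc _ ≤ (1 + s) * ((lam ^ (R + k)) ^ 2 * (1 - s)) :=
            mul_le_mul_of_nonneg_left e2 (by linarith)
        _ = (lam ^ (R + k)) ^ 2 * (1 - s ^ 2) := by ring
        _ ≤ (lam ^ (R + k)) ^ 2 * 1 :=
            mul_le_mul_of_nonneg_left (by nlinarith) (sq_nonneg _)
        _ ≤ _ := by linarith
    refine h3.trans (h4.trans (mul_le_mul_of_nonneg_left ?_ hC0))
    rw [Real.sqrt_le_left (pow_nonneg hlam0 _)]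
    exact h5
  have hcount := count_bound (L - M) M C lam hC0 hlam0 hlam1 c hsym hnear hfar
  -- assembling
  have hMpos : 1 ≤ M := by omega
  have hNcast : ((L - M : ℕ) : ℝ) = (L : ℝ) - M := by
    rw [Nat.cast_sub (by omega)]
  have hMr : (1 : ℝ) ≤ M := by exact_mod_cast hMpos
  have hMLr : 2 * (M : ℝ) ≤ L := by exact_mod_cast hML
  set N : ℝ := (L : ℝ) - M with hN
  have hNpos : 0 < N := by linarith
  have hpt : ∀ x : Fin (L + 1) → Fin d,
      chiSq (fun w => (∑ l ∈ (Finset.Ico M L).attach,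
          if window d (L + 1) S x l.1 (icoLtSucc l) = w then (1 : ℝ) else 0) / N) ν ≤
      (fun y => (m * N ^ 2)⁻¹ * ∑ i ∈ Finset.range (L - M), ∑ j ∈ Finset.range (L - M),
        ∑ w, D w (shSeq i y) * D w (shSeq j y)) (extSeq hz x) := by
    intro x
    set y := extSeq hz x with hy
    have e1 : ∀ w, (∑ l ∈ (Finset.Ico M L).attach,
          if window d (L + 1) S x l.1 (icoLtSucc l) = w then (1 : ℝ) else 0) =
        ∑ i ∈ Finset.range (L - M), Φ w (shSeq i y) := by
      intro w
      have e2 : ∀ l ∈ (Finset.Ico M L).attach,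
          (if window d (L + 1) S x l.1 (icoLtSucc l) = w then (1 : ℝ) else 0) =
          Φ w (shSeq (l.1 - M) y) := by
        intro l _
        have hl := Finset.mem_Ico.mp l.2
        have hw := hwext (L + 1) (l.1 - M) x (by omega)
        have : window d (L + 1) S x l.1 (icoLtSucc l) = win (shSeq (l.1 - M) y) := by
          rw [← hw]
          congr 1
          omega
        rw [this]
      rw [Finset.sum_congr rfl e2,
        Finset.sum_attach (Finset.Ico M L) (fun l => Φ w (shSeq (l - M) y)),
        Finset.sum_Ico_eq_sum_range]
      exact Finset.sum_congr rfl fun j _ => by rw [Nat.add_sub_cancel_left]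
    have e3 : ∑ i ∈ Finset.range (L - M), ∑ j ∈ Finset.range (L - M),
        ∑ w, D w (shSeq i y) * D w (shSeq j y) =
        ∑ w, (∑ i ∈ Finset.range (L - M), D w (shSeq i y)) ^ 2 := by
      simp only [sq, Finset.sum_mul_sum]
      rw [Finset.sum_comm (s := Finset.univ)]
      exact Finset.sum_congr rfl fun i _ => Finset.sum_comm
    simp only [chiSq, e1]
    rw [e3, Finset.mul_sum]
    refine Finset.sum_le_sum fun w _ => ?_
    have e4 : ∑ i ∈ Finset.range (L - M), D w (shSeq i y) =
        ∑ i ∈ Finset.range (L - M), Φ w (shSeq i y) - N * ν w := by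
      simp only [D, Finset.sum_sub_distrib, Finset.sum_const, Finset.card_range, nsmul_eq_mul,
        hNcast]
    rw [e4]
    set B := ∑ i ∈ Finset.range (L - M), Φ w (shSeq i y)
    have e5 : B / N - ν w = (B - N * ν w) / N := by field_simp
    rw [e5, div_pow, div_div, inv_mul_eq_div]
    refine div_le_div_of_nonneg_left (sq_nonneg _) (by positivity) ?_
    rw [mul_comm]
    exact mul_le_mul_of_nonneg_left (hmle w) (sq_nonneg _)
  have hlhs : ∑ x : Fin (L + 1) → Fin d,
        ngramProb d n R (L + 1) r pk μ0 (by omega) x *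
          chiSq
            (fun w =>
              (∑ l ∈ (Finset.Ico M L).attach,
                  if window d (L + 1) S x l.1 (icoLtSucc l) = w then (1 : ℝ) else 0) / N) ν ≤
      (m * N ^ 2)⁻¹ * ∑ i ∈ Finset.range (L - M), ∑ j ∈ Finset.range (L - M), c i j := by
    have hpos : ∀ x : Fin (L + 1) → Fin d,
        0 ≤ ngramProb d n R (L + 1) r pk μ0 (by omega) x := fun x =>
      mul_nonneg (hμ00 _) (Finset.prod_nonneg fun _ _ => hpk0 _ _)
    refine (Finset.sum_le_sum fun x _ => mul_le_mul_of_nonneg_left (hpt x) (hpos x)).trans ?_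
    rw [hexp μ0 (L + 1) (by omega) (fun y => (m * N ^ 2)⁻¹ * ∑ i ∈ Finset.range (L - M),
      ∑ j ∈ Finset.range (L - M), ∑ w, D w (shSeq i y) * D w (shSeq j y))]
    apply le_of_eq
    change E _ = _
    rw [hEmul, hEsum]
    simp only [hEsum, c]
  refine hlhs.trans ?_
  rw [hNcast] at hcount
  have hl1 : 0 < 1 - lam := by linarith
  set A := (1 - lam)⁻¹ with hA
  have hA0 : 0 < A := inv_pos.2 hl1
  have hmN : 0 < m * N ^ 2 := by positivity
  have hLpos : 0 < (L : ℝ) := by linarith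
  calc _ ≤ (m * N ^ 2)⁻¹ * (N * (2 * (2 * M + 1) + 2 * (C * A))) :=
        mul_le_mul_of_nonneg_left hcount (inv_nonneg.2 hmN.le)
    _ = (2 * (2 * M + 1) + 2 * (C * A)) / (N * m) := by
        field_simp
    _ ≤ _ := by
        rw [div_le_div_iff₀ (by positivity) (by positivity)]
        have hCA : 0 ≤ C * A := mul_nonneg hC0 hA0.le
        have hx : (2 * (2 * M + 1) + 2 * (C * A)) * L ≤ (4 * A * C + 16 * M) * N := by
          have : (L : ℝ) ≤ 2 * N := by linarith
          calc _ ≤ (2 * (2 * M + 1) + 2 * (C * A)) * (2 * N) :=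
                mul_le_mul_of_nonneg_left this (by positivity)
            _ ≤ _ := by nlinarith
        calc _ = ((2 * (2 * M + 1) + 2 * (C * A)) * L) * m := by ring
          _ ≤ ((4 * A * C + 16 * M) * N) * m := mul_le_mul_of_nonneg_right hx hm0.le
          _ = _ := by ring
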